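/- arXiv:2509.24247 — 5 statements merged into one kernel-verified Lean document; each statement's English description precedes it below -/
import Mathlib

section
/- Fix a blocklength L > 0 and a channel coding rate R_c > 0. Then the approximate log-BER function ρ̃_b(γ) = log₁₀(1/(R_c·L)) + log₁₀ Q( √L·(log₂(1+γ) − R_c) / ( log₂(e)·√(1 − 1/(1+γ)²) ) ) is strictly decreasing in γ on the interval (0, ∞). -/
/-!
Both the prefactor `1 / (Rc * L)` and the base of the logarithm are harmless, so everything reduces to
two monotonicity facts: the Gaussian tail `gaussQ` is positive and strictly decreasing
(`gaussQ_strictAnti`, `gaussQ_pos`), and its argument is strictly increasing in `γ`.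

For the latter put `s = 1 - 1 / (1 + γ) ^ 2 ∈ (0, 1)`, which is strictly increasing in `γ`, so that
`log (1 + γ) = -log (1 - s) / 2`. Up to the factor `√L`, the argument is then
`log (1 + γ) / √s - Rc * log 2 / √s`. The subtracted term is strictly decreasing because `Rc > 0`.
The first one is `√s * (-log (1 - s) / s) / 2`, a product of increasing positive functions: the
quotient `-log (1 - s) / s` is the slope of a secant of the concave function `log` through the
point `1` (`neg_log_div_sqrt_lt`). No derivative is needed.
-/

/-- The Gaussian Q-function `Q(x) = (1/√(2π)) ∫_x^∞ e^{−t²/2} dt`. -/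
noncomputable def gaussQ (x : ℝ) : ℝ :=
  (1 / Real.sqrt (2 * Real.pi)) * ∫ t in Set.Ioi x, Real.exp (-t ^ 2 / 2)

lemma gaussQ_strictAnti : StrictAnti gaussQ := by
  intro a b hab
  have hi : MeasureTheory.Integrable (fun t : ℝ => Real.exp (-t ^ 2 / 2)) := by
    have h := integrable_exp_neg_mul_sq (b := 1 / 2) (by norm_num)
    refine h.congr (Filter.Eventually.of_forall fun t => ?_)
    dsimp only
    ring_nf
  have hsplit : (∫ t in a..b, Real.exp (-t ^ 2 / 2)) =
      (∫ t in Set.Ioi a, Real.exp (-t ^ 2 / 2)) - ∫ t in Set.Ioi b, Real.exp (-t ^ 2 / 2) :=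
    (intervalIntegral.integral_Ioi_sub_Ioi hi.integrableOn hab.le).symm
  have hpos : 0 < ∫ t in a..b, Real.exp (-t ^ 2 / 2) :=
    intervalIntegral.intervalIntegral_pos_of_pos hi.intervalIntegrable
      (fun t => Real.exp_pos _) hab
  unfold gaussQ
  have hc : 0 < 1 / Real.sqrt (2 * Real.pi) := by positivity
  exact mul_lt_mul_of_pos_left (by linarith) hc

lemma gaussQ_pos (x : ℝ) : 0 < gaussQ x := by
  have h0 : 0 ≤ gaussQ (x + 1) := by
    unfold gaussQ
    exact mul_nonneg (by positivity) (MeasureTheory.integral_nonneg fun t => (Real.exp_pos _).le)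
  exact h0.trans_lt (gaussQ_strictAnti (lt_add_one x))

/-- Strict concavity of `log` makes the secant slope `-log (1 - s) / s` increasing; dividing by
`√s` instead of `s` only multiplies this by the increasing factor `√s`. -/
lemma neg_log_div_sqrt_lt {s t : ℝ} (hs : 0 < s) (hst : s < t) (ht : t < 1) :
    -Real.log (1 - s) / Real.sqrt s < -Real.log (1 - t) / Real.sqrt t := by
  have hsec := strictConcaveOn_log_Ioi.secant_strict_mono (a := 1) (x := 1 - t) (y := 1 - s)
    (by simp) (by simpa using ht) (by simpa using hst.trans ht) (by linarith) (by linarith)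
    (by linarith)
  have e : ∀ r : ℝ, (Real.log (1 - r) - Real.log 1) / (1 - r - 1) = -Real.log (1 - r) / r := by
    intro r
    rw [Real.log_one, sub_zero, show 1 - r - 1 = -r by ring, div_neg, neg_div]
  rw [e, e] at hsec
  have e' : ∀ r : ℝ, -Real.log (1 - r) / Real.sqrt r = Real.sqrt r * (-Real.log (1 - r) / r) := by
    intro r
    rw [mul_div_left_comm, Real.sqrt_div_self, div_eq_mul_inv]
  have hp : 0 ≤ -Real.log (1 - s) / s :=
    div_nonneg (by linarith [Real.log_nonpos (x := 1 - s) (by linarith) (by linarith)]) hs.le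
  rw [e', e']
  exact mul_lt_mul'' (Real.sqrt_lt_sqrt hs.le hst) hsec (Real.sqrt_nonneg _) hp

/-- For fixed blocklength `L > 0` and channel coding rate `Rc > 0`, the approximate
log-BER `ρ̃_b(γ) = log₁₀(1/(Rc·L)) + log₁₀ Q(√L·(log₂(1+γ) − Rc)/(log₂(e)·√(1 − 1/(1+γ)²)))`
is strictly decreasing on `(0, ∞)`. -/
theorem logBER_strictAntiOn (L Rc : ℝ) (hL : 0 < L) (hRc : 0 < Rc) :
    StrictAntiOn (fun γ : ℝ =>
      Real.logb 10 (1 / (Rc * L)) +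
        Real.logb 10 (gaussQ (Real.sqrt L * (Real.logb 2 (1 + γ) - Rc) /
          (Real.logb 2 (Real.exp 1) * Real.sqrt (1 - 1 / (1 + γ) ^ 2)))))
      (Set.Ioi 0) := by
  intro x hx y hy hxy
  rw [Set.mem_Ioi] at hx hy
  have hlog2 : 0 < Real.log 2 := Real.log_pos (by norm_num)
  -- The argument of `gaussQ` in terms of `s = 1 - 1 / (1 + γ) ^ 2`.
  have key : ∀ γ : ℝ, 0 < γ → Real.sqrt L * (Real.logb 2 (1 + γ) - Rc) /
      (Real.logb 2 (Real.exp 1) * Real.sqrt (1 - 1 / (1 + γ) ^ 2)) =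
      Real.sqrt L * ((-Real.log (1 - (1 - 1 / (1 + γ) ^ 2)) / Real.sqrt (1 - 1 / (1 + γ) ^ 2)) / 2
        - Rc * Real.log 2 * (1 / Real.sqrt (1 - 1 / (1 + γ) ^ 2))) := by
    intro γ hγ
    have hl : Real.log (1 - (1 - 1 / (1 + γ) ^ 2)) = -2 * Real.log (1 + γ) := by
      rw [sub_sub_cancel, one_div, Real.log_inv, Real.log_pow]
      push_cast
      ring
    have hlt : 1 / (1 + γ) ^ 2 < 1 := by
      rw [div_lt_one (by positivity)]
      nlinarith
    have hs : 0 < Real.sqrt (1 - 1 / (1 + γ) ^ 2) := Real.sqrt_pos.mpr (by linarith)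
    rw [hl]
    generalize Real.sqrt (1 - 1 / (1 + γ) ^ 2) = r at hs
    unfold Real.logb
    rw [Real.log_exp]
    field_simp
  have hsx : 0 < 1 - 1 / (1 + x) ^ 2 := by
    rw [sub_pos, div_lt_one (by positivity)]
    nlinarith
  have hst : 1 - 1 / (1 + x) ^ 2 < 1 - 1 / (1 + y) ^ 2 :=
    sub_lt_sub_left (one_div_lt_one_div_of_lt (by positivity) (by gcongr)) 1
  have ht : 1 - 1 / (1 + y) ^ 2 < 1 := sub_lt_self 1 (by positivity)
  have h1 := neg_log_div_sqrt_lt hsx hst ht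
  have h2 := mul_lt_mul_of_pos_left (one_div_lt_one_div_of_lt (Real.sqrt_pos.mpr hsx)
    (Real.sqrt_lt_sqrt hsx.le hst)) (mul_pos hRc hlog2)
  refine add_lt_add_right (Real.logb_lt_logb (by norm_num) (gaussQ_pos _)
    (gaussQ_strictAnti ?_)) _
  rw [key x hx, key y hy]
  exact mul_lt_mul_of_pos_left (by linarith) (Real.sqrt_pos.mpr hL)
end

section
/- Fix L > 0 and R_c ≥ 0. The function ρ̂(γ) = √L·(ln(1+γ) − R_c·ln 2) / √(1 − 1/(1+γ)²) is strictly increasing in γ on the interval (0, ∞). -/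
/-!
Put `x = 1 + γ > 1`, `N = ln x − Rc·ln 2` and `D = √(1 − 1/x²)`. Then `N' = 1/x` and
`D' = 1/(x³ D)`, so the derivative of `√L·N/D` is `√L·(x² − 1 − N)/(x³ D³)`. It is positive because
`N ≤ ln x ≤ x − 1 < x² − 1`.
-/

theorem one_sub_inv_sq_pos {x : ℝ} (hx : 1 < x) : 0 < 1 - 1 / x ^ 2 := by
  have h : 1 < x ^ 2 := by nlinarith
  have : 1 / x ^ 2 < 1 := (div_lt_one (by linarith)).2 h
  linarith

theorem hasDerivAt_qArg (L Rc : ℝ) {γ : ℝ} (hγ : 0 < γ) :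
    HasDerivAt (fun γ : ℝ =>
      Real.sqrt L * (Real.log (1 + γ) - Rc * Real.log 2) / Real.sqrt (1 - 1 / (1 + γ) ^ 2))
      (Real.sqrt L * ((1 + γ) ^ 2 - 1 - (Real.log (1 + γ) - Rc * Real.log 2)) /
        ((1 + γ) ^ 3 * Real.sqrt (1 - 1 / (1 + γ) ^ 2) ^ 3)) γ := by
  have hx : (1 + γ) ≠ 0 := by positivity
  have hu := one_sub_inv_sq_pos (x := 1 + γ) (by linarith)
  have h1 : HasDerivAt (fun γ : ℝ => 1 + γ) 1 γ := (hasDerivAt_id γ).const_add 1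
  have hN := ((h1.log hx).sub_const (Rc * Real.log 2)).const_mul (Real.sqrt L)
  have hD := ((((hasDerivAt_const γ (1 : ℝ)).div (h1.pow 2) (pow_ne_zero 2 hx)).const_sub 1).sqrt
    hu.ne')
  have hs := Real.sqrt_pos.2 hu
  refine (hN.div hD hs.ne').congr_deriv ?_
  have hsq : Real.sqrt (1 - 1 / (1 + γ) ^ 2) ^ 2 * (1 + γ) ^ 2 = (1 + γ) ^ 2 - 1 := by
    rw [Real.sq_sqrt hu.le]
    field_simp
  simp only [Pi.div_apply, Pi.pow_apply]
  generalize Real.sqrt (1 - 1 / (1 + γ) ^ 2) = s at *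
  generalize Real.log (1 + γ) - Rc * Real.log 2 = N at *
  generalize 1 + γ = x at *
  rw [← hsq]
  field_simp
  ring

/-- For fixed `L > 0` and `Rc ≥ 0`, the function
`ρ̂(γ) = √L·(ln(1+γ) − Rc·ln 2)/√(1 − 1/(1+γ)²)` is strictly increasing on `(0, ∞)`. -/
theorem qArg_strictMonoOn (L Rc : ℝ) (hL : 0 < L) (hRc : 0 ≤ Rc) :
    StrictMonoOn (fun γ : ℝ =>
      Real.sqrt L * (Real.log (1 + γ) - Rc * Real.log 2) /
        Real.sqrt (1 - 1 / (1 + γ) ^ 2)) (Set.Ioi 0) := by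
  refine strictMonoOn_of_deriv_pos (convex_Ioi 0)
    (fun γ hγ => (hasDerivAt_qArg L Rc hγ).continuousAt.continuousWithinAt) ?_
  intro γ hγ
  rw [interior_Ioi] at hγ
  have hγ : 0 < γ := hγ
  rw [(hasDerivAt_qArg L Rc hγ).deriv]
  have hs := Real.sqrt_pos.2 (one_sub_inv_sq_pos (x := 1 + γ) (by linarith))
  have hlog := Real.log_le_sub_one_of_pos (x := 1 + γ) (by linarith)
  have hc : 0 ≤ Rc * Real.log 2 := mul_nonneg hRc (Real.log_nonneg (by norm_num))
  have hN : 0 < (1 + γ) ^ 2 - 1 - (Real.log (1 + γ) - Rc * Real.log 2) := by nlinarith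
  have hsL := Real.sqrt_pos.2 hL
  exact div_pos (mul_pos hsL hN) (by positivity)
end

section
/- The function x ↦ ln( ∫_x^∞ e^{−t²/2} dt ) is concave on the interval [0, ∞). -/
/-!
Write `g t = exp (-t² / 2)` and `G x = ∫_x^∞ g`. By the fundamental theorem of calculus `G' = -g`,
so `(log G)' = -g / G` and, since `g' x = -x g x`,
`(log G)'' x = g x * (x * G x - g x) / G x ^ 2`. Concavity is therefore the tail bound
`x * G x ≤ g x` (`mul_gaussTail_le`), which follows by integrating `x g t ≤ t g t` over `t > x`:
the right-hand side has antiderivative `-g`. The argument does not use `0 ≤ x`.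
-/

open MeasureTheory Set Filter Topology

/-- The tail `∫_x^∞ e^{-t²/2} dt` of the unnormalised Gaussian integral. -/
noncomputable def gaussTail (x : ℝ) : ℝ := ∫ t in Ioi x, Real.exp (-t ^ 2 / 2)

lemma integrable_gauss : Integrable fun t : ℝ => Real.exp (-t ^ 2 / 2) := by
  refine (integrable_exp_neg_mul_sq (b := 1 / 2) (by norm_num)).congr (.of_forall fun t => ?_)
  simp only
  ring_nf

lemma integrable_mul_gauss : Integrable fun t : ℝ => t * Real.exp (-t ^ 2 / 2) := by
  refine (integrable_mul_exp_neg_mul_sq (b := 1 / 2) (by norm_num)).congr (.of_forall fun t => ?_)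
  simp only
  ring_nf

lemma hasDerivAt_gauss (x : ℝ) :
    HasDerivAt (fun t : ℝ => Real.exp (-t ^ 2 / 2)) (-(x * Real.exp (-x ^ 2 / 2))) x := by
  convert! (((hasDerivAt_id x).pow 2).neg.div_const 2).exp using 1
  simp
  ring

lemma gaussTail_pos (x : ℝ) : 0 < gaussTail x := by
  unfold gaussTail
  rw [setIntegral_pos_iff_support_of_nonneg_ae (.of_forall fun t => (Real.exp_pos _).le)
    integrable_gauss.integrableOn]
  have : Function.support (fun t : ℝ => Real.exp (-t ^ 2 / 2)) = univ := by
    ext t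
    simp [Real.exp_ne_zero]
  simp [this]

lemma hasDerivAt_gaussTail (x : ℝ) :
    HasDerivAt gaussTail (-Real.exp (-x ^ 2 / 2)) x := by
  have hc : Continuous fun t : ℝ => Real.exp (-t ^ 2 / 2) := by fun_prop
  have h : gaussTail = fun y => gaussTail 0 - ∫ t in (0 : ℝ)..y, Real.exp (-t ^ 2 / 2) := by
    ext y
    have := intervalIntegral.integral_interval_add_Ioi
      (integrable_gauss.integrableOn (s := Ioi 0)) (integrable_gauss.integrableOn (s := Ioi y))
    simp only [gaussTail]
    linarith
  rw [h]
  exact (hc.integral_hasStrictDerivAt 0 x).hasDerivAt.const_sub _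

lemma tendsto_gauss : Tendsto (fun t : ℝ => Real.exp (-t ^ 2 / 2)) atTop (𝓝 0) := by
  refine Real.tendsto_exp_atBot.comp ?_
  have h : Tendsto (fun t : ℝ => t ^ 2 / 2) atTop atTop :=
    (tendsto_pow_atTop two_ne_zero).atTop_div_const two_pos
  simpa only [neg_div, Function.comp_def] using tendsto_neg_atTop_atBot.comp h

lemma integral_mul_gauss (x : ℝ) :
    ∫ t in Ioi x, t * Real.exp (-t ^ 2 / 2) = Real.exp (-x ^ 2 / 2) := by
  have := integral_Ioi_of_hasDerivAt_of_tendsto' (a := x) (fun t _ => hasDerivAt_gauss t)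
    integrable_mul_gauss.neg.integrableOn tendsto_gauss
  rw [integral_neg] at this
  linarith

lemma mul_gaussTail_le (x : ℝ) : x * gaussTail x ≤ Real.exp (-x ^ 2 / 2) := by
  rw [gaussTail, ← integral_mul_gauss, ← integral_const_mul]
  refine setIntegral_mono_on (integrable_gauss.const_mul x).integrableOn
    integrable_mul_gauss.integrableOn measurableSet_Ioi fun t ht => ?_
  have : x ≤ t := le_of_lt ht
  gcongr

/-- The function `x ↦ ln(∫_x^∞ e^{−t²/2} dt)` is concave on `[0, ∞)`. -/
theorem log_gaussTail_concaveOn :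
    ConcaveOn ℝ (Set.Ici 0)
      (fun x : ℝ => Real.log (∫ t in Set.Ioi x, Real.exp (-t ^ 2 / 2))) := by
  change ConcaveOn ℝ (Ici 0) fun x => Real.log (gaussTail x)
  have h1 (x : ℝ) : HasDerivAt (fun x => Real.log (gaussTail x))
      (-Real.exp (-x ^ 2 / 2) / gaussTail x) x :=
    (hasDerivAt_gaussTail x).log (gaussTail_pos x).ne'
  have h2 (x : ℝ) := (hasDerivAt_gauss x).fun_neg.fun_div (hasDerivAt_gaussTail x)
    (gaussTail_pos x).ne'
  have hd : deriv (fun x => Real.log (gaussTail x)) =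
      fun x => -Real.exp (-x ^ 2 / 2) / gaussTail x := funext fun x => (h1 x).deriv
  refine concaveOn_of_deriv2_nonpos' (convex_Ici 0)
    (fun x _ => (h1 x).differentiableAt.differentiableWithinAt) ?_ fun x _ => ?_
  · rw [hd]
    exact fun x _ => (h2 x).differentiableAt.differentiableWithinAt
  · rw [Function.iterate_succ, Function.comp_apply, hd, Function.iterate_one, (h2 x).deriv]
    refine div_nonpos_of_nonpos_of_nonneg ?_ (sq_nonneg _)
    nlinarith [mul_gaussTail_le x, Real.exp_pos (-x ^ 2 / 2)]
end

section
/- For all ρ ≥ 0 and ρₙ ≥ 0, ln( ∫_ρ^∞ e^{−t²/2} dt ) ≤ ln( ∫_{ρₙ}^∞ e^{−t²/2} dt ) − ( e^{−ρₙ²/2} / ∫_{ρₙ}^∞ e^{−t²/2} dt )·(ρ − ρₙ); that is, on [0, ∞) the logarithm of the Gaussian tail lies below each of its tangent lines. -/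
/-!
Write `φ t = e^{-t²/2}` and `G x = ∫_x^∞ φ`. Since `G' = -φ`, the logarithmic derivative of `G`
is `-φ/G`, so concavity of `log G` amounts to monotonicity of the hazard rate `φ/G`. As
`φ' x = -x φ x`, the derivative of `φ/G` is `φ (φ - x G) / G²`, which is nonnegative by the Mills
ratio bound `x G x ≤ φ x`; the latter holds because `φ x = ∫_x^∞ t φ t dt ≥ x ∫_x^∞ φ`.
This gives concavity of `log G` on all of `ℝ`, and a concave function lies below its tangent lines.
-/

open MeasureTheory Set Filter Topology

/-- The hazard rate of the Gaussian is nondecreasing. -/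
lemma monotone_gauss_div_gaussTail :
    Monotone fun x => Real.exp (-x ^ 2 / 2) / gaussTail x := by
  refine monotone_of_hasDerivAt_nonneg
    (fun x => (hasDerivAt_gauss x).div (hasDerivAt_gaussTail x) (gaussTail_pos x).ne')
    fun x => div_nonneg ?_ (sq_nonneg _)
  have := mul_nonneg (Real.exp_pos (-x ^ 2 / 2)).le (sub_nonneg.2 (mul_gaussTail_le x))
  linarith

lemma hasDerivAt_log_gaussTail (x : ℝ) :
    HasDerivAt (fun y => Real.log (gaussTail y)) (-(Real.exp (-x ^ 2 / 2) / gaussTail x)) x := by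
  simpa [neg_div] using (hasDerivAt_gaussTail x).log (gaussTail_pos x).ne'

lemma concaveOn_log_gaussTail : ConcaveOn ℝ univ fun x => Real.log (gaussTail x) := by
  refine Antitone.concaveOn_univ_of_deriv
    (fun x => (hasDerivAt_log_gaussTail x).differentiableAt) ?_
  rw [funext fun x => (hasDerivAt_log_gaussTail x).deriv]
  exact monotone_gauss_div_gaussTail.neg

/-- On `[0, ∞)` the logarithm of the Gaussian tail lies below each of its tangent lines:
for `ρ, ρₙ ≥ 0`,
`ln(∫_ρ^∞ e^{−t²/2} dt) ≤ ln(∫_{ρₙ}^∞ e^{−t²/2} dt) − (e^{−ρₙ²/2}/∫_{ρₙ}^∞ e^{−t²/2} dt)·(ρ − ρₙ)`. -/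
theorem log_gaussTail_le_tangent (ρ ρn : ℝ) (hρ : 0 ≤ ρ) (hρn : 0 ≤ ρn) :
    Real.log (∫ t in Set.Ioi ρ, Real.exp (-t ^ 2 / 2)) ≤
      Real.log (∫ t in Set.Ioi ρn, Real.exp (-t ^ 2 / 2)) -
        (Real.exp (-ρn ^ 2 / 2) / ∫ t in Set.Ioi ρn, Real.exp (-t ^ 2 / 2)) * (ρ - ρn) := by
  change Real.log (gaussTail ρ) ≤ Real.log (gaussTail ρn) -
    (Real.exp (-ρn ^ 2 / 2) / gaussTail ρn) * (ρ - ρn)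
  rcases lt_trichotomy ρ ρn with h | rfl | h
  · have := concaveOn_log_gaussTail.le_slope_of_hasDerivAt (mem_univ ρ) (mem_univ ρn) h
      (hasDerivAt_log_gaussTail ρn)
    rw [slope_def_field, le_div_iff₀ (sub_pos.2 h)] at this
    linarith
  · simp
  · have := concaveOn_log_gaussTail.slope_le_of_hasDerivAt (mem_univ ρn) (mem_univ ρ) h
      (hasDerivAt_log_gaussTail ρn)
    rw [slope_def_field, div_le_iff₀ (sub_pos.2 h)] at this
    linarith
end

section
/- Fix L > 0, R_c > 0, a₁ > 0, d_c > 0, and arbitrary real constants a₀, d_s. Define ρ̃_b(γ) = log₁₀(1/(R_c·L)) + log₁₀ Q( √L·(log₂(1+γ) − R_c) / ( log₂(e)·√(1 − 1/(1+γ)²) ) ). Then the logistic end-to-end distortion D̃(γ) = d_s + d_c / ( 1 + e^{−a₁·(ρ̃_b(γ) − a₀)} ) is strictly decreasing in γ on (0, ∞). -/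
lemma integrable_exp_neg_sq_div_two :
    MeasureTheory.Integrable (fun t : ℝ => Real.exp (-t ^ 2 / 2)) := by
  convert integrable_exp_neg_mul_sq (b := 1 / 2) (by norm_num) using 3
  ring

lemma one_sub_one_div_sq_pos {u : ℝ} (hu : 1 < u) : 0 < 1 - 1 / u ^ 2 := by
  have : 1 / u ^ 2 < 1 := (div_lt_one (by positivity)).2 (by nlinarith)
  linarith

lemma hasDerivAt_log_sub_div_sqrt (c : ℝ) {u : ℝ} (hu : 1 < u) :
    HasDerivAt (fun u : ℝ => (Real.log u - c) / Real.sqrt (1 - 1 / u ^ 2))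
      ((u ^ 2 - 1 - Real.log u + c) / (u ^ 3 * Real.sqrt (1 - 1 / u ^ 2) ^ 3)) u := by
  have hu0 : u ≠ 0 := by positivity
  have hw := one_sub_one_div_sq_pos hu
  have hs : 0 < Real.sqrt (1 - 1 / u ^ 2) := Real.sqrt_pos.2 hw
  have hsq : Real.sqrt (1 - 1 / u ^ 2) ^ 2 = 1 - 1 / u ^ 2 := Real.sq_sqrt hw.le
  have hw' : HasDerivAt (fun u : ℝ => 1 - 1 / u ^ 2) (2 / u ^ 3) u := by
    have := ((hasDerivAt_const u (1 : ℝ)).fun_div (hasDerivAt_pow 2 u)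
      (pow_ne_zero 2 hu0)).const_sub 1
    refine this.congr_deriv ?_
    field_simp
    norm_num [mul_comm]
  have := ((Real.hasDerivAt_log hu0).sub_const c).fun_div (hw'.sqrt hw.ne') hs.ne'
  refine this.congr_deriv ?_
  generalize Real.sqrt (1 - 1 / u ^ 2) = s at hs hsq ⊢
  -- eliminates the root: `u² s² = u² - 1`
  have key : u ^ 2 - 1 = u ^ 2 * s ^ 2 := by
    rw [hsq]
    field_simp
  rw [key]
  field_simp
  ring

lemma strictMonoOn_log_sub_div_sqrt {c : ℝ} (hc : 0 < c) :
    StrictMonoOn (fun u : ℝ => (Real.log u - c) / Real.sqrt (1 - 1 / u ^ 2)) (Set.Ioi 1) := by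
  refine strictMonoOn_of_deriv_pos (convex_Ioi 1)
    (fun u hu => (hasDerivAt_log_sub_div_sqrt c hu).continuousAt.continuousWithinAt) ?_
  intro u hu
  rw [interior_Ioi] at hu
  have hu1 : 1 < u := hu
  have hs : 0 < Real.sqrt (1 - 1 / u ^ 2) := Real.sqrt_pos.2 (one_sub_one_div_sq_pos hu1)
  rw [(hasDerivAt_log_sub_div_sqrt c hu1).deriv]
  have hlog := Real.log_le_sub_one_of_pos (zero_lt_one.trans hu1)
  have hnum : 0 < u ^ 2 - 1 - Real.log u + c := by nlinarith
  positivity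

/-- The argument of the Q-function, rewritten with natural logarithms. -/
lemma gaussQ_arg_eq (L Rc u : ℝ) :
    Real.sqrt L * (Real.logb 2 u - Rc) /
        (Real.logb 2 (Real.exp 1) * Real.sqrt (1 - 1 / u ^ 2)) =
      Real.sqrt L * ((Real.log u - Rc * Real.log 2) / Real.sqrt (1 - 1 / u ^ 2)) := by
  have h2 : Real.log 2 ≠ 0 := (Real.log_pos one_lt_two).ne'
  have hlogb : Real.logb 2 u - Rc = (Real.log u - Rc * Real.log 2) / Real.log 2 := by
    rw [Real.logb]
    field_simp
  rw [hlogb, Real.logb, Real.log_exp, ← mul_div_assoc, ← mul_div_assoc, div_div,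
    ← mul_assoc, mul_one_div_cancel h2, one_mul]

/-- For `L > 0`, `Rc > 0`, `a₁ > 0`, `d_c > 0` and arbitrary `a₀, d_s`, the logistic
end-to-end distortion `D̃(γ) = d_s + d_c/(1 + e^{−a₁·(ρ̃_b(γ) − a₀)})`, where
`ρ̃_b(γ) = log₁₀(1/(Rc·L)) + log₁₀ Q(√L·(log₂(1+γ) − Rc)/(log₂(e)·√(1 − 1/(1+γ)²)))`,
is strictly decreasing on `(0, ∞)`. -/
theorem logistic_distortion_strictAntiOn (L Rc a1 dc a0 ds : ℝ)
    (hL : 0 < L) (hRc : 0 < Rc) (ha1 : 0 < a1) (hdc : 0 < dc) :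
    StrictAntiOn (fun γ : ℝ =>
      ds + dc / (1 + Real.exp (-a1 * ((Real.logb 10 (1 / (Rc * L)) +
        Real.logb 10 (gaussQ (Real.sqrt L * (Real.logb 2 (1 + γ) - Rc) /
          (Real.logb 2 (Real.exp 1) * Real.sqrt (1 - 1 / (1 + γ) ^ 2))))) - a0))))
      (Set.Ioi 0) := by
  intro x hx y hy hxy
  have hx0 : 0 < x := hx
  have hy0 : 0 < y := hy
  have harg := mul_lt_mul_of_pos_left
    (strictMonoOn_log_sub_div_sqrt (mul_pos hRc (Real.log_pos one_lt_two))
      (show 1 + x ∈ Set.Ioi 1 from lt_add_of_pos_right 1 hx0)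
      (show 1 + y ∈ Set.Ioi 1 from lt_add_of_pos_right 1 hy0)
      (add_lt_add_right hxy 1))
    (Real.sqrt_pos.2 hL)
  have hlogQ := Real.logb_lt_logb (b := 10) (by norm_num) (gaussQ_pos _) (gaussQ_strictAnti harg)
  simp only [gaussQ_arg_eq]
  have hexp := mul_lt_mul_of_pos_left hlogQ ha1
  refine add_lt_add_right (div_lt_div_of_pos_left hdc (by positivity)
    (add_lt_add_right (Real.exp_lt_exp.2 ?_) 1)) ds
  linarith
end
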